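/- Let m ≥ 2. There exists a qubit strategy for the (2,m) REC — states ρ_a for a ∈ (Fin m)² (2×2 complex positive semidefinite matrices of trace 1) and two POVMs M₁, M₂ with elements M_{ic} (2×2 complex positive semidefinite, Σ_{c} M_{ic} = I) satisfying M_{ic} = 0 for all c ≥ 2 — whose average exclusion success probability p(REC) = (1/(2m²)) Σ_{a∈(Fin m)²} Σ_{i=1,2} Re Tr[(I − M_{i a_i}) ρ_a] equals 1 − (2−√2)/m². In particular, since 1 − (2−√2)/m² > 1 − 1/m², qubit strategies strictly beat the optimal classical strategy for every m ≥ 2. -/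

import Mathlib

/-!
Identify a real Bloch vector `(x, z)` with the matrix `(I + x X + z Z) / 2`, so that traces of
products are inner products: `Tr[P(u) P(v)] = (1 + u·v) / 2`. The first question is answered by
measuring `Z`, the second by measuring `X`, with only outcomes `0` and `1` ever occurring.

If both letters lie in `{0, 1}`, the state is the pure state opposite to the bisector of the two
Bloch vectors `±Z`, `±X`; the two failure probabilities are each `(1 - √2/2) / 2`, so they add up
to `1 - √2/2`. If exactly one letter lies in `{0, 1}`, the state orthogonal to the corresponding
projector never fails, and if no letter does, any state works. The total failure weight is
therefore `4 (1 - √2/2)`, coming from four words, and dividing by `2m²` gives `(2 - √2) / m²`.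

The case distinction is carried by a sign `s c ∈ {1, -1, 0}` attached to each letter, whose square
is the indicator of `{0, 1}`; the failure weight of the word `(a, b)` is
`(s a)² (s b)² (1 - √2/2)`, a product form that sums at once (`sum_sgn_sq`).
-/

open Matrix
open scoped ComplexOrder

/-- A valid qubit strategy for the `(2,m)` REC: states are PSD with unit trace and the
two decoding `m`-outcome families are POVMs. -/
def IsQubitStrategyM (m : ℕ) (ρ : Fin m → Fin m → Matrix (Fin 2) (Fin 2) ℂ)
    (M : Fin 2 → Fin m → Matrix (Fin 2) (Fin 2) ℂ) : Prop :=
  (∀ a₁ a₂, (ρ a₁ a₂).PosSemidef ∧ (ρ a₁ a₂).trace = 1) ∧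
  (∀ i c, (M i c).PosSemidef) ∧
  (∀ i, ∑ c : Fin m, M i c = 1)

/-- Average exclusion success probability for the `(2,m)` REC with a qubit strategy. -/
noncomputable def pRECM (m : ℕ) (ρ : Fin m → Fin m → Matrix (Fin 2) (Fin 2) ℂ)
    (M : Fin 2 → Fin m → Matrix (Fin 2) (Fin 2) ℂ) : ℝ :=
  (1 / (2 * (m : ℝ) ^ 2)) * ∑ a₁ : Fin m, ∑ a₂ : Fin m, ∑ i : Fin 2,
    (((1 - M i (if i = 0 then a₁ else a₂)) * ρ a₁ a₂).trace).re

namespace RECQubit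

/-- The matrix `(t I + x X + z Z) / 2`. For `t = 1` and `x² + z² = 1` it is the pure state with
Bloch vector `(x, z)`; `t = 0`, `x = z = 0` gives the zero operator of a never-occurring outcome. -/
noncomputable def bloch (t x z : ℝ) : Matrix (Fin 2) (Fin 2) ℂ :=
  !![(((t + z) / 2 : ℝ) : ℂ), ((x / 2 : ℝ) : ℂ); ((x / 2 : ℝ) : ℂ), (((t - z) / 2 : ℝ) : ℂ)]

/-- The sign of a letter: `1` for `0`, `-1` for `1`, and `0` for all letters `c ≥ 2`. -/
def sgn : ℕ → ℝ
  | 0 => 1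
  | 1 => -1
  | _ + 2 => 0

/-- Absolute value of the component of the state for a word with signs `s`, `t` along each axis
whose letter has nonzero sign: `√2/2` if both signs are nonzero, and `1` otherwise. -/
noncomputable def amp (s t : ℝ) : ℝ := 1 - s ^ 2 * t ^ 2 * (1 - √2 / 2)

/-- The state encoding a word with signs `s`, `t`. The extra term in the `X` component only
matters for `s = t = 0`, where it makes the state pure. -/
noncomputable def state (s t : ℝ) : Matrix (Fin 2) (Fin 2) ℂ :=
  bloch 1 (-(amp s t * t) + (1 - s ^ 2) * (1 - t ^ 2)) (-(amp s t * s))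

/-- The measurements: `Z` for the first question, `X` for the second. -/
noncomputable def meas (i : Fin 2) (s : ℝ) : Matrix (Fin 2) (Fin 2) ℂ :=
  if i = 0 then bloch (s ^ 2) 0 s else bloch (s ^ 2) s 0

lemma sgn_cases (n : ℕ) : sgn n = 0 ∨ sgn n = 1 ∨ sgn n = -1 := by
  match n with
  | 0 => simp [sgn]
  | 1 => simp [sgn]
  | _ + 2 => simp [sgn]

/-- Under these hypotheses the matrix is a projection (possibly zero), hence `A = Aᴴ A`. -/
lemma bloch_posSemidef {t x z : ℝ} (ht : t = 0 ∨ t = 1) (h : x ^ 2 + z ^ 2 = t) :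
    (bloch t x z).PosSemidef := by
  have hH : (bloch t x z)ᴴ = bloch t x z := by
    ext i j
    fin_cases i <;> fin_cases j <;> simp [bloch, Matrix.conjTranspose_apply]
  have htt : t ^ 2 = t := by rcases ht with rfl | rfl <;> norm_num
  have hxz : t * x = x ∧ t * z = z := by
    rcases ht with rfl | rfl
    · have hx : x = 0 := by nlinarith [sq_nonneg x, sq_nonneg z]
      have hz : z = 0 := by nlinarith [sq_nonneg x, sq_nonneg z]
      simp [hx, hz]
    · simp
  obtain ⟨hx, hz⟩ := hxz
  have htt' : (t : ℂ) ^ 2 = t := mod_cast htt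
  have hx' : (t : ℂ) * x = x := mod_cast hx
  have hz' : (t : ℂ) * z = z := mod_cast hz
  have h' : (x : ℂ) ^ 2 + (z : ℂ) ^ 2 = t := mod_cast h
  have hP : bloch t x z * bloch t x z = bloch t x z := by
    ext i j
    fin_cases i <;> fin_cases j <;>
      simp only [bloch, Matrix.mul_apply, Fin.sum_univ_two] <;> simp
    · linear_combination htt' / 4 + hz' / 2 + h' / 4
    · linear_combination hx' / 2
    · linear_combination hx' / 2
    · linear_combination htt' / 4 - hz' / 2 + h' / 4
  have := Matrix.posSemidef_conjTranspose_mul_self (bloch t x z)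
  rwa [hH, hP] at this

lemma state_posSemidef {s t : ℝ} (hs : s = 0 ∨ s = 1 ∨ s = -1) (ht : t = 0 ∨ t = 1 ∨ t = -1) :
    (state s t).PosSemidef := by
  refine bloch_posSemidef (Or.inr rfl) ?_
  have h2 : √2 ^ 2 = 2 := Real.sq_sqrt (by norm_num)
  rcases hs with rfl | rfl | rfl <;> rcases ht with rfl | rfl | rfl <;> simp [amp] <;>
    nlinarith

lemma state_trace (s t : ℝ) : (state s t).trace = 1 := by
  simp only [state, bloch, Matrix.trace_fin_two_of]
  push_cast
  ring

lemma meas_posSemidef (i : Fin 2) {s : ℝ} (hs : s = 0 ∨ s = 1 ∨ s = -1) :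
    (meas i s).PosSemidef := by
  have h : s ^ 2 = 0 ∨ s ^ 2 = 1 := by rcases hs with rfl | rfl | rfl <;> norm_num
  unfold meas
  split_ifs <;> exact bloch_posSemidef h (by ring)

lemma meas_zero (i : Fin 2) : meas i 0 = 0 := by
  ext j k
  fin_cases i <;> fin_cases j <;> fin_cases k <;> simp [meas, bloch]

lemma sum_meas (n : ℕ) (i : Fin 2) : ∑ c : Fin (n + 2), meas i (sgn c) = 1 := by
  simp only [Fin.sum_univ_succ, Fin.val_zero, Fin.val_succ, zero_add, sgn, meas_zero,
    Finset.sum_const_zero, add_zero]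
  ext j k
  fin_cases i <;> fin_cases j <;> fin_cases k <;> simp [meas, bloch] <;> norm_num

lemma sum_sgn_sq (n : ℕ) : ∑ c : Fin (n + 2), sgn c ^ 2 = 2 := by
  simp [Fin.sum_univ_succ, sgn]
  norm_num

/-- The two success probabilities of a word add up to `2` minus its failure weight. -/
lemma word_success {s t : ℝ} (hs : s = 0 ∨ s = 1 ∨ s = -1) (ht : t = 0 ∨ t = 1 ∨ t = -1) :
    ∑ i : Fin 2, (((1 - meas i (if i = 0 then s else t)) * state s t).trace).re
      = 2 - s ^ 2 * t ^ 2 * (1 - √2 / 2) := by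
  have h (A : Matrix (Fin 2) (Fin 2) ℂ) :
      (((1 - A) * state s t).trace).re = 1 - ((A * state s t).trace).re := by
    rw [sub_mul, one_mul, Matrix.trace_sub, state_trace, Complex.sub_re, Complex.one_re]
  have h' (t x z t' x' z' : ℝ) :
      ((bloch t x z * bloch t' x' z').trace).re = (t * t' + x * x' + z * z') / 2 := by
    simp [bloch, Matrix.trace_fin_two]
    ring
  simp only [h, Fin.sum_univ_two]
  simp only [meas, state, if_true, one_ne_zero, if_false, h', amp]
  rcases hs with rfl | rfl | rfl <;> rcases ht with rfl | rfl | rfl <;> ring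

end RECQubit

/-- There is a qubit strategy for the `(2,m)` REC, using only the first two outcomes of
each decoding POVM, achieving success probability `1 - (2-√2)/m²`, which strictly beats
the classical optimum `1 - 1/m²`. -/
theorem stmt16 (m : ℕ) (hm : 2 ≤ m) :
    (∃ (ρ : Fin m → Fin m → Matrix (Fin 2) (Fin 2) ℂ)
      (M : Fin 2 → Fin m → Matrix (Fin 2) (Fin 2) ℂ),
      IsQubitStrategyM m ρ M ∧
      (∀ i (c : Fin m), 2 ≤ (c : ℕ) → M i c = 0) ∧
      pRECM m ρ M = 1 - (2 - Real.sqrt 2) / (m : ℝ) ^ 2) ∧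
    1 - (2 - Real.sqrt 2) / (m : ℝ) ^ 2 > 1 - 1 / (m : ℝ) ^ 2 := by
  have hm0 : (0 : ℝ) < (m : ℝ) ^ 2 := by positivity
  refine ⟨⟨fun a b => RECQubit.state (RECQubit.sgn a) (RECQubit.sgn b),
    fun i c => RECQubit.meas i (RECQubit.sgn c), ⟨fun a b => ⟨?_, ?_⟩, fun i c => ?_, ?_⟩,
    ?_, ?_⟩, ?_⟩
  · exact RECQubit.state_posSemidef (RECQubit.sgn_cases _) (RECQubit.sgn_cases _)
  · exact RECQubit.state_trace _ _
  · exact RECQubit.meas_posSemidef i (RECQubit.sgn_cases _)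
  · obtain ⟨n, rfl⟩ := Nat.exists_eq_add_of_le' hm
    exact RECQubit.sum_meas n
  · intro i c hc
    obtain ⟨k, hk⟩ := Nat.exists_eq_add_of_le' hc
    simp only [hk, RECQubit.sgn, RECQubit.meas_zero]
  · have hw (a b : Fin m) := RECQubit.word_success (RECQubit.sgn_cases a) (RECQubit.sgn_cases b)
    have hsq : ∑ c : Fin m, RECQubit.sgn c ^ 2 = 2 := by
      obtain ⟨n, rfl⟩ := Nat.exists_eq_add_of_le' hm
      exact RECQubit.sum_sgn_sq n
    have hif (i : Fin 2) (a b : Fin m) : RECQubit.sgn ((if i = 0 then a else b : Fin m) : ℕ)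
        = if i = 0 then RECQubit.sgn a else RECQubit.sgn b := by split_ifs <;> rfl
    simp only [pRECM, hif, hw, Finset.sum_sub_distrib, ← Finset.sum_mul, ← Finset.mul_sum, hsq]
    simp only [Finset.sum_const, Finset.card_univ, Fintype.card_fin, nsmul_eq_mul]
    field_simp
  · have h : (2 - √2) / (m : ℝ) ^ 2 < 1 / (m : ℝ) ^ 2 := by
      have : (1 : ℝ) < √2 := Real.lt_sqrt_of_sq_lt (by norm_num)
      gcongr
      linarith
    linarith
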